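/- There exists an absolute constant C > 0 such that the following holds: let ξ ∈ (0,1], let G be a d-regular graph on n vertices with d = n^ξ, and suppose G satisfies the δ-small-set α-bipartite density condition for some α ∈ (√d, d] with (α·log d)/(ξ·d) ≤ 1 and some δ ∈ (0,1] with δ ≥ (α/d)/(√5/2 − 1). Then for every probability distribution p on V, ‖Pp‖₂² ≤ C_δ/n + C·√((α·log d)/(ξ·d))·‖p‖₂², where C_δ := δ + (5/4)·(1−δ). -/

import Mathlib

/-!
A function whose sums over sets of size `k ≤ m` are at most `a * k + b * √k` has, once sorted in
decreasing order, `k`-th largest value at most `a + b / √k` for `k ≤ m`, hence at most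
`a + b / √m` from there on. Pairing with a nonnegative `f` and applying Cauchy–Schwarz to
`∑ i, f i / √(i + 1)` bounds `∑ v, f v * g v`, at the cost of a factor `√(1 + log n)` from the
harmonic sum. Doing this once in each variable turns a density condition on small sets into a bound
for the bilinear form `q ⬝ᵥ P *ᵥ p`. At `q = P *ᵥ p` that form is `∑ v, (P *ᵥ p) v ^ 2`, and
double stochasticity of `P` removes `P` from the resulting bound.

Write `β = α / d`. The `ℓ¹` error term is of order `β / (δ * n)`, and
`β / δ = (β / δ) * (1 - δ) + β` splits it into the part `(1 - δ) / (4 * n)` of `C_δ / n`, since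
`β / δ` is bounded by `√5 / 2 - 1 ≤ 1 / 8`, and a part absorbed by `√(β * log n) * ∑ v, p v ^ 2`.
-/

open Finset

/-- The random-walk matrix `P = A/d` of a graph `G` (intended: `d`-regular). -/
noncomputable def walkMatrix {n : ℕ} (G : SimpleGraph (Fin n)) [DecidableRel G.Adj]
    (d : ℕ) : Matrix (Fin n) (Fin n) ℝ :=
  (d : ℝ)⁻¹ • G.adjMatrix ℝ

/-- `p` is a probability distribution on `Fin n`. -/
def IsProbDist {n : ℕ} (p : Fin n → ℝ) : Prop :=
  (∀ v, 0 ≤ p v) ∧ ∑ v, p v = 1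

/-- Total variation distance of `p` from the uniform distribution on `Fin n`. -/
noncomputable def tvFromUniform {n : ℕ} (p : Fin n → ℝ) : ℝ :=
  (1 / 2) * ∑ v, |p v - 1 / (n : ℝ)|

/-- `d_TV(t)`: worst-case total variation distance from uniform after `t` steps
of the random walk. -/
noncomputable def dTV {n : ℕ} (G : SimpleGraph (Fin n)) [DecidableRel G.Adj]
    (d t : ℕ) : ℝ :=
  sSup {x : ℝ | ∃ p : Fin n → ℝ, IsProbDist p ∧
    x = tvFromUniform ((walkMatrix G d ^ t).mulVec p)}

/-- The `ε`-mixing time `τ_ε(P)`. -/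
noncomputable def mixingTime {n : ℕ} (G : SimpleGraph (Fin n)) [DecidableRel G.Adj]
    (d : ℕ) (ε : ℝ) : ℕ :=
  sInf {t : ℕ | dTV G d t ≤ ε}

/-- `|E(S,T)|`: the number of ordered edges `(u,v)` with `u ∈ S`, `v ∈ T`, `uv ∈ E`. -/
def bipCount {n : ℕ} (G : SimpleGraph (Fin n)) [DecidableRel G.Adj]
    (S T : Finset (Fin n)) : ℕ :=
  ((S ×ˢ T).filter (fun e => G.Adj e.1 e.2)).card

/-- The `α`-bipartite density condition. -/
def BipDensity {n : ℕ} (G : SimpleGraph (Fin n)) [DecidableRel G.Adj]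
    (d : ℕ) (α : ℝ) : Prop :=
  ∀ S T : Finset (Fin n),
    (bipCount G S T : ℝ) ≤ d * S.card * T.card / n + α * Real.sqrt (S.card * T.card)

/-- The `δ`-small-set `α`-bipartite density condition. -/
def SmallSetBipDensity {n : ℕ} (G : SimpleGraph (Fin n)) [DecidableRel G.Adj]
    (d : ℕ) (α δ : ℝ) : Prop :=
  ∀ S T : Finset (Fin n), (S.card : ℝ) ≤ δ * n → (T.card : ℝ) ≤ δ * n →
    (bipCount G S T : ℝ) ≤ d * S.card * T.card / n + α * Real.sqrt (S.card * T.card)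

section SmallSets

open scoped Matrix

variable {ι κ : Type*} [Fintype ι] [Fintype κ]

lemma exists_equiv_fin_antitone {α : Type*} [LinearOrder α] (g : ι → α) :
    ∃ e : Fin (Fintype.card ι) ≃ ι, Antitone (g ∘ e) :=
  let e₀ := (Fintype.equivFin ι).symm
  ⟨(Tuple.sort (OrderDual.toDual ∘ g ∘ e₀)).trans e₀, fun _ _ hij =>
    Tuple.monotone_sort (OrderDual.toDual ∘ g ∘ e₀) hij⟩

lemma mul_le_sum_filter_lt_of_antitone {n k : ℕ} {g : Fin n → ℝ} (hg : Antitone g) {i : Fin n}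
    (hk : k ≤ i + 1) : k * g i ≤ ∑ j : Fin n with j.val < k, g j := by
  have hcard : #{j : Fin n | j.val < k} = k := by rw [Fin.card_filter_val_lt]; omega
  have hle : ∀ j ∈ ({j : Fin n | j.val < k} : Finset (Fin n)), g i ≤ g j := fun j hj =>
    hg (Fin.le_def.2 (by have := (mem_filter.1 hj).2; omega))
  simpa only [hcard, nsmul_eq_mul] using card_nsmul_le_sum _ _ _ hle

lemma le_add_mul_inv_sqrt_of_antitone {n m : ℕ} (hm : 0 < m) {g : Fin n → ℝ} (hg : Antitone g)
    {a b : ℝ} (hb : 0 ≤ b) (hsum : ∀ S : Finset (Fin n), #S ≤ m → ∑ v ∈ S, g v ≤ a * #S + b * √(#S))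
    (i : Fin n) : g i ≤ a + b * ((√((i : ℝ) + 1))⁻¹ + (√m)⁻¹) := by
  have hmin : ∀ k : ℕ, 0 < k → k ≤ i + 1 → k ≤ m → g i ≤ a + b * (√k)⁻¹ := by
    intro k hk hki hkm
    have hk' : (0 : ℝ) < k := by exact_mod_cast hk
    have hcard : #{j : Fin n | j.val < k} = k := by rw [Fin.card_filter_val_lt]; omega
    have hS := (mul_le_sum_filter_lt_of_antitone hg hki).trans (hsum _ (hcard.trans_le hkm))
    rw [hcard] at hS
    refine le_of_mul_le_mul_left (hS.trans_eq ?_) hk'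
    rw [← Real.sqrt_div_self]
    field_simp
  rcases le_total (i + 1 : ℕ) m with hi | hi
  · refine (hmin (i + 1) i.val.succ_pos le_rfl hi).trans ?_
    push_cast
    gcongr
    exact le_add_of_nonneg_right (by positivity)
  · refine (hmin m hm hi le_rfl).trans ?_
    gcongr
    exact le_add_of_nonneg_left (by positivity)

lemma sum_mul_inv_sqrt_le {n : ℕ} (f : Fin n → ℝ) :
    ∑ i, f i * (√((i : ℝ) + 1))⁻¹ ≤ √(1 + Real.log n) * √(∑ i, f i ^ 2) := by
  have hharmonic : ∑ i : Fin n, (√((i : ℝ) + 1))⁻¹ ^ 2 = harmonic n := by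
    rw [Fin.sum_univ_eq_sum_range fun i : ℕ => (√((i : ℝ) + 1))⁻¹ ^ 2, harmonic]
    push_cast
    exact sum_congr rfl fun i _ => by rw [inv_pow, Real.sq_sqrt (by positivity)]
  calc ∑ i, f i * (√((i : ℝ) + 1))⁻¹
      ≤ √(∑ i, f i ^ 2) * √(∑ i : Fin n, (√((i : ℝ) + 1))⁻¹ ^ 2) :=
        Real.sum_mul_le_sqrt_mul_sqrt _ _ _
    _ ≤ √(1 + Real.log n) * √(∑ i, f i ^ 2) := by
        rw [hharmonic, mul_comm]
        gcongr
        exact harmonic_le_one_add_log n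

/-- The error functional of the small-set method: bounding the sums of `g` by `√|S|` on sets of
size at most `m` bounds the pairing of `g` with a nonnegative `f` by `smallSetNorm m f`. It is meant
for nonnegative `f`, so no absolute values are taken in the `ℓ¹` term. -/
noncomputable def smallSetNorm (m : ℕ) (f : ι → ℝ) : ℝ :=
  √(1 + Real.log (Fintype.card ι)) * √(∑ v, f v ^ 2) + (∑ v, f v) / √m

lemma smallSetNorm_nonneg {m : ℕ} {f : ι → ℝ} (hf : ∀ v, 0 ≤ f v) : 0 ≤ smallSetNorm m f :=
  add_nonneg (by positivity) (div_nonneg (sum_nonneg fun v _ => hf v) (Real.sqrt_nonneg _))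

lemma sum_mul_le_mul_smallSetNorm {m : ℕ} (hm : 0 < m) {f g : ι → ℝ} (hf : ∀ v, 0 ≤ f v)
    {a b : ℝ} (hb : 0 ≤ b)
    (hsum : ∀ S : Finset ι, #S ≤ m → ∑ v ∈ S, g v ≤ a * #S + b * √(#S)) :
    ∑ v, f v * g v ≤ a * ∑ v, f v + b * smallSetNorm m f := by
  obtain ⟨e, he⟩ := exists_equiv_fin_antitone g
  have hge : ∀ i, g (e i) ≤ a + b * ((√((i : ℝ) + 1))⁻¹ + (√m)⁻¹) :=
    le_add_mul_inv_sqrt_of_antitone hm he hb fun S hS => by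
      simpa using hsum (S.map e.toEmbedding) (by simpa using hS)
  calc ∑ v, f v * g v
      = ∑ i, f (e i) * g (e i) := (e.sum_comp fun v => f v * g v).symm
    _ ≤ ∑ i, f (e i) * (a + b * ((√((i : ℝ) + 1))⁻¹ + (√m)⁻¹)) :=
        sum_le_sum fun i _ => mul_le_mul_of_nonneg_left (hge i) (hf _)
    _ = a * ∑ i, f (e i) +
          b * (∑ i, f (e i) * (√((i : ℝ) + 1))⁻¹ + (∑ i, f (e i)) / √m) := by
        simp only [div_eq_mul_inv, mul_sum, sum_mul, ← sum_add_distrib]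
        exact sum_congr rfl fun i _ => by ring
    _ ≤ a * ∑ i, f (e i) + b * (√(1 + Real.log (Fintype.card ι)) * √(∑ i, f (e i) ^ 2) +
          (∑ i, f (e i)) / √m) := by
        gcongr
        exact sum_mul_inv_sqrt_le fun i => f (e i)
    _ = a * ∑ v, f v + b * smallSetNorm m f := by
        rw [e.sum_comp f, e.sum_comp fun v => f v ^ 2, smallSetNorm]

lemma dotProduct_mulVec_le_mul_smallSetNorm {k m : ℕ} (hk : 0 < k) (hm : 0 < m) {M : Matrix ι κ ℝ}
    {q : ι → ℝ} {p : κ → ℝ} (hq : ∀ u, 0 ≤ q u) (hp : ∀ v, 0 ≤ p v) {a b : ℝ} (hb : 0 ≤ b)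
    (hM : ∀ (S : Finset ι) (T : Finset κ), #S ≤ k → #T ≤ m →
      ∑ u ∈ S, ∑ v ∈ T, M u v ≤ a * #S * #T + b * √(#S * #T)) :
    q ⬝ᵥ M *ᵥ p ≤
      a * (∑ u, q u) * (∑ v, p v) + b * smallSetNorm k q * smallSetNorm m p := by
  have hrows : ∀ S : Finset ι, #S ≤ k → ∑ u ∈ S, (M *ᵥ p) u ≤
      a * (∑ v, p v) * #S + b * smallSetNorm m p * √(#S) := by
    intro S hS
    calc ∑ u ∈ S, (M *ᵥ p) u
        = ∑ v, p v * ∑ u ∈ S, M u v := by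
          simp_rw [Matrix.mulVec, dotProduct, mul_sum]
          rw [sum_comm]
          exact sum_congr rfl fun v _ => sum_congr rfl fun u _ => mul_comm _ _
      _ ≤ a * #S * ∑ v, p v + b * √(#S) * smallSetNorm m p :=
          sum_mul_le_mul_smallSetNorm hm hp (by positivity) fun T hT => by
            rw [sum_comm]
            refine (hM S T hS hT).trans_eq ?_
            rw [Real.sqrt_mul (Nat.cast_nonneg _)]
            ring
      _ = a * (∑ v, p v) * #S + b * smallSetNorm m p * √(#S) := by ring
  calc q ⬝ᵥ M *ᵥ p
      ≤ a * (∑ v, p v) * ∑ u, q u + b * smallSetNorm m p * smallSetNorm k q :=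
        sum_mul_le_mul_smallSetNorm hk hq (mul_nonneg hb (smallSetNorm_nonneg hp)) hrows
    _ = a * (∑ u, q u) * (∑ v, p v) + b * smallSetNorm k q * smallSetNorm m p := by ring

end SmallSets

section Estimates

lemma one_div_card_le_sum_sq {ι : Type*} [Fintype ι] {p : ι → ℝ} (hp : ∑ v, p v = 1) :
    1 / (Fintype.card ι : ℝ) ≤ ∑ v, p v ^ 2 := by
  have hcs := sq_sum_le_card_mul_sum_sq (s := univ) (f := p)
  rw [hp, one_pow, card_univ] at hcs
  exact div_le_of_le_mul₀ (Nat.cast_nonneg _) (by positivity) (hcs.trans_eq (mul_comm _ _))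

lemma half_le_log_of_two_le {x : ℝ} (hx : 2 ≤ x) : 1 / 2 ≤ Real.log x :=
  calc (1 / 2 : ℝ) ≤ Real.log 2 := by linarith [Real.log_two_gt_d9]
    _ ≤ Real.log x := Real.log_le_log two_pos hx

lemma div_le_of_eight_mul_le {N m β δ : ℝ} (hN : 0 < N) (hβ : 0 ≤ β) (hβδ : 8 * β ≤ δ)
    (hδ : 0 < δ) (hδ1 : δ ≤ 1) (hm : δ * N / 2 ≤ m) :
    β / m ≤ 1 / (4 * N) ∧ β / m ≤ (1 - δ) / (4 * N) + 2 * β / N := by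
  have hβm : β / m ≤ 2 * (β / δ) / N :=
    calc β / m ≤ β / (δ * N / 2) := by gcongr
      _ = 2 * (β / δ) / N := by field_simp
  have hratio : β / δ ≤ 1 / 8 := by rw [div_le_iff₀ hδ]; linarith
  constructor
  · calc β / m ≤ 2 * (β / δ) / N := hβm
      _ ≤ 2 * (1 / 8) / N := by gcongr
      _ = 1 / (4 * N) := by field_simp; norm_num
  · calc β / m ≤ 2 * (β / δ) / N := hβm
      _ = 2 * (β / δ) * (1 - δ) / N + 2 * β / N := by field_simp; ring
      _ ≤ 2 * (1 / 8) * (1 - δ) / N + 2 * β / N := by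
          have : 0 ≤ 1 - δ := sub_nonneg.2 hδ1
          gcongr
      _ = (1 - δ) / (4 * N) + 2 * β / N := by ring

lemma add_sq_le_of_sq_le {r X e y z : ℝ} (hr : 0 ≤ r) (hr1 : r ≤ 1) (hX : 0 ≤ X)
    (hy : y ^ 2 ≤ 3 * r ^ 2 * X) (hz : z ^ 2 ≤ X / 4) (hze : z ^ 2 ≤ e + 4 * r ^ 2 * X) :
    (y + z) ^ 2 ≤ e + 9 * r * X := by
  have hyz : y * z ≤ r * X := by
    refine le_of_sq_le_sq ?_ (by positivity)
    calc (y * z) ^ 2 = y ^ 2 * z ^ 2 := mul_pow _ _ _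
      _ ≤ 3 * r ^ 2 * X * (X / 4) := by gcongr
      _ = 3 / 4 * (r * X) ^ 2 := by ring
      _ ≤ (r * X) ^ 2 := mul_le_of_le_one_left (sq_nonneg _) (by norm_num)
  have hrr : r ^ 2 * X ≤ r * X := by
    gcongr
    exact pow_le_of_le_one hr hr1 two_ne_zero
  calc (y + z) ^ 2 = y ^ 2 + 2 * (y * z) + z ^ 2 := by ring
    _ ≤ e + 9 * r * X := by linarith

lemma mul_sqrt_add_inv_sqrt_sq_le {N m β δ ℓ X : ℝ} (hN : 0 < N) (hβ : 0 ≤ β) (hβδ : 8 * β ≤ δ)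
    (hδ : 0 < δ) (hδ1 : δ ≤ 1) (hm : δ * N / 2 ≤ m) (hℓ : 1 / 2 ≤ ℓ) (hβℓ : β * ℓ ≤ 1)
    (hX : 1 / N ≤ X) :
    β * (√(1 + ℓ) * √X + 1 / √m) ^ 2 ≤ (1 - δ) / (4 * N) + 9 * √(β * ℓ) * X := by
  have hX0 : 0 ≤ X := (one_div_pos.2 hN).le.trans hX
  have hm0 : 0 < m := lt_of_lt_of_le (by positivity) hm
  obtain ⟨hβm, hβm'⟩ := div_le_of_eight_mul_le hN hβ hβδ hδ hδ1 hm
  have hr2 : √(β * ℓ) ^ 2 = β * ℓ := Real.sq_sqrt (by positivity)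
  have hy : (√β * (√(1 + ℓ) * √X)) ^ 2 ≤ 3 * √(β * ℓ) ^ 2 * X :=
    calc (√β * (√(1 + ℓ) * √X)) ^ 2 = β * (1 + ℓ) * X := by
          rw [mul_pow, mul_pow, Real.sq_sqrt hβ, Real.sq_sqrt (by positivity), Real.sq_sqrt hX0,
            mul_assoc]
      _ ≤ β * (3 * ℓ) * X := by gcongr; linarith
      _ = 3 * √(β * ℓ) ^ 2 * X := by rw [hr2]; ring
  have hz : (√β * (1 / √m)) ^ 2 = β / m := by
    rw [mul_one_div, div_pow, Real.sq_sqrt hβ, Real.sq_sqrt hm0.le]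
  have hβmX : β / m ≤ X / 4 :=
    calc β / m ≤ 1 / (4 * N) := hβm
      _ = 1 / N / 4 := by field_simp
      _ ≤ X / 4 := by gcongr
  have hβmr : β / m ≤ (1 - δ) / (4 * N) + 4 * √(β * ℓ) ^ 2 * X :=
    calc β / m ≤ (1 - δ) / (4 * N) + 2 * β * (1 / N) := by rwa [mul_one_div]
      _ ≤ (1 - δ) / (4 * N) + 2 * (2 * (β * ℓ)) * X := by
          gcongr
          nlinarith
      _ = (1 - δ) / (4 * N) + 4 * √(β * ℓ) ^ 2 * X := by rw [hr2]; ring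
  calc β * (√(1 + ℓ) * √X + 1 / √m) ^ 2
      = (√β * (√(1 + ℓ) * √X) + √β * (1 / √m)) ^ 2 := by rw [← mul_add, mul_pow, Real.sq_sqrt hβ]
    _ ≤ (1 - δ) / (4 * N) + 9 * √(β * ℓ) * X :=
        add_sq_le_of_sq_le (Real.sqrt_nonneg _) (Real.sqrt_le_one.2 hβℓ) hX0 hy
          (hz.trans_le hβmX) (hz.trans_le hβmr)

end Estimates

section DoublyStochastic

open scoped Matrix

variable {ι : Type*} [Fintype ι] [DecidableEq ι] {P : Matrix ι ι ℝ}

lemma sum_convexOn_mulVec_le_of_mem_doublyStochastic (hP : P ∈ doublyStochastic ℝ ι) {s : Set ℝ}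
    {φ : ℝ → ℝ} (hφ : ConvexOn ℝ s φ) {p : ι → ℝ} (hp : ∀ v, p v ∈ s) :
    ∑ v, φ ((P *ᵥ p) v) ≤ ∑ v, φ (p v) :=
  calc ∑ v, φ ((P *ᵥ p) v)
      ≤ ∑ v, (P *ᵥ (φ ∘ p)) v := sum_le_sum fun v _ =>
        hφ.map_sum_le (fun _ _ => nonneg_of_mem_doublyStochastic hP)
          (sum_row_of_mem_doublyStochastic hP v) fun w _ => hp w
    _ = ∑ v, φ (p v) := sum_mulVec_of_mem_doublyStochastic hP

lemma sum_sq_mulVec_le_of_mem_doublyStochastic (hP : P ∈ doublyStochastic ℝ ι) (p : ι → ℝ) :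
    ∑ v, (P *ᵥ p) v ^ 2 ≤ ∑ v, p v ^ 2 :=
  sum_convexOn_mulVec_le_of_mem_doublyStochastic hP even_two.convexOn_pow fun v =>
    Set.mem_univ (p v)

lemma smallSetNorm_mulVec_le (hP : P ∈ doublyStochastic ℝ ι) (m : ℕ) (p : ι → ℝ) :
    smallSetNorm m (P *ᵥ p) ≤ smallSetNorm m p := by
  rw [smallSetNorm, smallSetNorm, sum_mulVec_of_mem_doublyStochastic hP]
  gcongr √(1 + Real.log _) * √?_ + _
  exact sum_sq_mulVec_le_of_mem_doublyStochastic hP p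

/-- The weighted form of the `δ`-small-set bipartite density condition: the mass that `P` puts on
`S × T` exceeds its average by at most `β * √(|S| |T|)` when `S` and `T` are small. For the walk
matrix of a `d`-regular graph the error parameter is `β = α / d`. -/
def SmallSetMatrixDensity (P : Matrix ι ι ℝ) (β δ : ℝ) : Prop :=
  ∀ S T : Finset ι, (#S : ℝ) ≤ δ * Fintype.card ι → (#T : ℝ) ≤ δ * Fintype.card ι →
    ∑ u ∈ S, ∑ v ∈ T, P u v ≤ #S * #T / Fintype.card ι + β * √(#S * #T)

lemma sum_sq_mulVec_le_inv_card_add_mul_smallSetNorm_sq (hP : P ∈ doublyStochastic ℝ ι) {β δ : ℝ}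
    (hβ : 0 ≤ β) (hcard : 1 ≤ δ * Fintype.card ι) (hdens : SmallSetMatrixDensity P β δ)
    {p : ι → ℝ} (hp : p ∈ stdSimplex ℝ ι) :
    ∑ v, (P *ᵥ p) v ^ 2 ≤
      1 / Fintype.card ι + β * smallSetNorm ⌊δ * Fintype.card ι⌋₊ p ^ 2 := by
  set m := ⌊δ * Fintype.card ι⌋₊
  have hm : 0 < m := Nat.floor_pos.2 hcard
  have hPp : ∀ v, 0 ≤ (P *ᵥ p) v := fun _ =>
    sum_nonneg fun w _ => mul_nonneg (nonneg_of_mem_doublyStochastic hP) (hp.1 w)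
  have hfloor : ∀ S : Finset ι, #S ≤ m → (#S : ℝ) ≤ δ * Fintype.card ι := fun _ hS =>
    (Nat.cast_le.2 hS).trans (Nat.floor_le (zero_le_one.trans hcard))
  calc ∑ v, (P *ᵥ p) v ^ 2
      = (P *ᵥ p) ⬝ᵥ P *ᵥ p := by simp only [dotProduct, sq]
    _ ≤ 1 / Fintype.card ι * (∑ v, (P *ᵥ p) v) * (∑ v, p v) +
          β * smallSetNorm m (P *ᵥ p) * smallSetNorm m p :=
        dotProduct_mulVec_le_mul_smallSetNorm hm hm hPp hp.1 hβ fun S T hS hT =>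
          (hdens S T (hfloor S hS) (hfloor T hT)).trans_eq (by ring)
    _ = 1 / Fintype.card ι + β * smallSetNorm m (P *ᵥ p) * smallSetNorm m p := by
        rw [sum_mulVec_of_mem_doublyStochastic hP, hp.2, mul_one, mul_one]
    _ ≤ 1 / Fintype.card ι + β * smallSetNorm m p * smallSetNorm m p := by
        gcongr
        · exact smallSetNorm_nonneg hp.1
        · exact smallSetNorm_mulVec_le hP m p
    _ = 1 / Fintype.card ι + β * smallSetNorm m p ^ 2 := by ring

theorem two_norm_decrease_of_small_set_bipartite_density_general [Nontrivial ι]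
    (hP : P ∈ doublyStochastic ℝ ι) {β δ : ℝ} (hβ : 0 ≤ β) (hβδ : 8 * β ≤ δ) (hδ1 : δ ≤ 1)
    (hcard : 1 ≤ δ * Fintype.card ι) (hdens : SmallSetMatrixDensity P β δ) {p : ι → ℝ}
    (hp : p ∈ stdSimplex ℝ ι) :
    ∑ v, (P *ᵥ p) v ^ 2 ≤ (δ + 5 / 4 * (1 - δ)) / Fintype.card ι +
      9 * √(β * Real.log (Fintype.card ι)) * ∑ v, p v ^ 2 := by
  set N : ℝ := (Fintype.card ι : ℝ)
  set X := ∑ v, p v ^ 2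
  have hN2 : 2 ≤ N := Nat.ofNat_le_cast.2 Fintype.one_lt_card
  have hδ : 0 < δ := pos_of_mul_pos_left (zero_lt_one.trans_le hcard) (by linarith)
  rcases le_total (β * Real.log N) 1 with hrate | hrate
  · calc ∑ v, (P *ᵥ p) v ^ 2
        ≤ 1 / N + β * smallSetNorm ⌊δ * N⌋₊ p ^ 2 :=
          sum_sq_mulVec_le_inv_card_add_mul_smallSetNorm_sq hP hβ hcard hdens hp
      _ = 1 / N + β * (√(1 + Real.log N) * √X + 1 / √⌊δ * N⌋₊) ^ 2 := by rw [smallSetNorm, hp.2]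
      _ ≤ 1 / N + ((1 - δ) / (4 * N) + 9 * √(β * Real.log N) * X) := by
          gcongr
          exact mul_sqrt_add_inv_sqrt_sq_le (by linarith) hβ hβδ hδ hδ1
            (Nat.div_two_lt_floor hcard).le (half_le_log_of_two_le hN2) hrate
            (one_div_card_le_sum_sq hp.2)
      _ = (δ + 5 / 4 * (1 - δ)) / N + 9 * √(β * Real.log N) * X := by field_simp; ring
  · have hsqrt : 1 ≤ 9 * √(β * Real.log N) := by linarith [Real.one_le_sqrt.2 hrate]
    calc ∑ v, (P *ᵥ p) v ^ 2
        ≤ 1 * X := by rw [one_mul]; exact sum_sq_mulVec_le_of_mem_doublyStochastic hP p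
      _ ≤ 9 * √(β * Real.log N) * X := by gcongr
      _ ≤ (δ + 5 / 4 * (1 - δ)) / N + 9 * √(β * Real.log N) * X :=
          le_add_of_nonneg_left (div_nonneg (by linarith) (by linarith))

end DoublyStochastic

section RandomWalk

variable {n d : ℕ} {G : SimpleGraph (Fin n)} [DecidableRel G.Adj]

lemma walkMatrix_mem_doublyStochastic (hG : G.IsRegularOfDegree d) (hd : 0 < d) :
    walkMatrix G d ∈ doublyStochastic ℝ (Fin n) := by
  have hd' : (d : ℝ) ≠ 0 := by positivity
  have hrow : ∀ u, ∑ v, walkMatrix G d u v = 1 := fun u => by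
    simp only [walkMatrix, Matrix.smul_apply, SimpleGraph.adjMatrix_apply, smul_eq_mul, ← mul_sum]
    rw [sum_boole, ← G.neighborFinset_eq_filter, G.card_neighborFinset_eq_degree, hG.degree_eq,
      inv_mul_cancel₀ hd']
  have hsymm : ∀ u v, walkMatrix G d u v = walkMatrix G d v u := fun u v => by
    simp [walkMatrix, SimpleGraph.adjMatrix_apply, G.adj_comm]
  refine mem_doublyStochastic_iff_sum.2 ⟨fun u v => ?_, hrow, fun v => ?_⟩
  · simp only [walkMatrix, Matrix.smul_apply, SimpleGraph.adjMatrix_apply, smul_eq_mul]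
    positivity
  · simp_rw [hsymm _ v, hrow]

lemma sum_sum_walkMatrix (S T : Finset (Fin n)) :
    ∑ u ∈ S, ∑ v ∈ T, walkMatrix G d u v = bipCount G S T / d := by
  simp only [walkMatrix, Matrix.smul_apply, SimpleGraph.adjMatrix_apply, smul_eq_mul, ← mul_sum,
    bipCount, card_filter, sum_product]
  push_cast
  rw [inv_mul_eq_div]

lemma smallSetMatrixDensity_walkMatrix (hd : 0 < d) {α δ : ℝ} (h : SmallSetBipDensity G d α δ) :
    SmallSetMatrixDensity (walkMatrix G d) (α / d) δ := by
  intro S T hS hT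
  rw [Fintype.card_fin] at hS hT ⊢
  calc ∑ u ∈ S, ∑ v ∈ T, walkMatrix G d u v
      = bipCount G S T / d := sum_sum_walkMatrix S T
    _ ≤ (d * #S * #T / n + α * √(#S * #T)) / d := by gcongr; exact h S T hS hT
    _ = #S * #T / n + α / d * √(#S * #T) := by
        have hd' : (d : ℝ) ≠ 0 := by positivity
        field_simp

end RandomWalk

section Parameters

lemma eight_mul_le_of_div_sqrt_five_le {β δ : ℝ} (hδ : 0 ≤ δ) (h : β / (√5 / 2 - 1) ≤ δ) :
    8 * β ≤ δ := by
  have hlower : 2 < √5 := Real.lt_sqrt_of_sq_lt (by norm_num)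
  have hupper : √5 ≤ 9 / 4 := Real.sqrt_le_iff.2 ⟨by norm_num, by norm_num⟩
  rw [div_le_iff₀ (by linarith)] at h
  nlinarith

lemma mul_log_rpow_div_eq {x ξ : ℝ} (hx : 0 < x) (hξ : ξ ≠ 0) (α : ℝ) :
    α * Real.log (x ^ ξ) / (ξ * x ^ ξ) = α / x ^ ξ * Real.log x := by
  rw [Real.log_rpow hx]
  field_simp

lemma one_le_mul_of_sqrt_lt {x y α δ : ℝ} (hx : 1 ≤ x) (hxy : x ≤ y) (hα : √x < α)
    (hδ : α / x ≤ δ) : 1 ≤ δ * y :=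
  calc 1 ≤ α := (Real.one_le_sqrt.2 hx).trans hα.le
    _ = α / x * x := by field_simp
    _ ≤ δ * y := by
        have : 0 ≤ α / x := div_nonneg ((Real.sqrt_nonneg _).trans hα.le) (by linarith)
        gcongr
        exact this.trans hδ

lemma one_lt_of_one_lt_rpow {x ξ : ℝ} (hx : 0 ≤ x) (hξ : 0 ≤ ξ) (h : 1 < x ^ ξ) : 1 < x :=
  lt_of_not_ge fun hx1 => h.not_ge (Real.rpow_le_one hx hx1 hξ)

end Parameters

/-- one-step 2-norm decrease from small-set bipartite density. -/
theorem two_norm_decrease_of_small_set_bipartite_density :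
    ∃ C : ℝ, 0 < C ∧
      ∀ (ξ : ℝ) (n d : ℕ) (G : SimpleGraph (Fin n)) [DecidableRel G.Adj] (α δ : ℝ),
        0 < ξ → ξ ≤ 1 →
        G.IsRegularOfDegree d →
        (d : ℝ) = (n : ℝ) ^ ξ →
        Real.sqrt d < α → α ≤ d →
        α * Real.log d / (ξ * d) ≤ 1 →
        0 < δ → δ ≤ 1 → (α / d) / (Real.sqrt 5 / 2 - 1) ≤ δ →
        SmallSetBipDensity G d α δ →
        ∀ p : Fin n → ℝ, IsProbDist p →
          ∑ v, ((walkMatrix G d).mulVec p v) ^ 2 ≤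
            (δ + (5 / 4) * (1 - δ)) / n +
              C * Real.sqrt (α * Real.log d / (ξ * d)) * ∑ v, (p v) ^ 2 := by
  refine ⟨9, by norm_num, ?_⟩
  intro ξ n d G _ α δ hξ hξ1 hG hd hα hαd _ hδ hδ1 hαδ hdens p hp
  have hd1 : (1 : ℝ) < d := Real.sqrt_lt_self_iff.1 (hα.trans_le hαd)
  have hn1 : (1 : ℝ) < n := one_lt_of_one_lt_rpow n.cast_nonneg hξ.le (hd ▸ hd1)
  have hdn : (d : ℝ) ≤ n := hd ▸ Real.rpow_le_self_of_one_le hn1.le hξ1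
  have hβ : 0 ≤ α / d := div_nonneg ((Real.sqrt_nonneg _).trans hα.le) d.cast_nonneg
  have hβδ : 8 * (α / d) ≤ δ := eight_mul_le_of_div_sqrt_five_le hδ.le hαδ
  have hδn : 1 ≤ δ * n := one_le_mul_of_sqrt_lt hd1.le hdn hα (by linarith)
  have hd0 : 0 < d := by exact_mod_cast zero_lt_one.trans hd1
  have : Nontrivial (Fin n) := Fin.nontrivial_iff_two_le.2 (by exact_mod_cast hn1)
  have hrate : α * Real.log d / (ξ * d) = α / d * Real.log n := by
    rw [hd, mul_log_rpow_div_eq (by linarith) hξ.ne']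
  rw [hrate]
  simpa only [Fintype.card_fin] using two_norm_decrease_of_small_set_bipartite_density_general
    (walkMatrix_mem_doublyStochastic hG hd0) hβ hβδ hδ1 (by simpa using hδn)
    (smallSetMatrixDensity_walkMatrix hd0 hdens) hp
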